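/- Let d ≥ 3 be an integer and p a prime with gcd(p,d) = 1. Let α : T_{d,p} → [0,∞) and 𝔫 = (𝔫_0,…,𝔫_{p−1}) ∈ [0,∞)^p with Σ_{j=0}^{p−1} 𝔫_j = 1 and Σ_{a ∈ T_{d,p}} α_a · Φ(a) = d·(𝔫_0,…,𝔫_{p−1}). Then equality −Σ_{a} α_a ln α_a + (d−1) Σ_{j} 𝔫_j ln 𝔫_j = 0 (convention 0·ln 0 = 0) holds if and only if either (i) α_a = 1/p^{d−1} for all a ∈ T_{d,p} and 𝔫_j = 1/p for all j, or (ii) α assigns value 1 to the all-zeros tuple and 0 to every other element of T_{d,p}, and 𝔫_0 = 1, 𝔫_1 = ⋯ = 𝔫_{p−1} = 0. -/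

import Mathlib

/-! The equality in question says `H(α) = (d - 1) H(m)` for the Shannon entropy `H`, where `α` is a
probability distribution on `T_{d,p}` and `m` is the average of its one-coordinate marginals.

For each coordinate `k` put `q_k(a) = ∏_{i ≠ k} m (a i)`. A tuple of `T_{d,p}` is determined by its
coordinates other than `k`, so `q_k` has total mass at most `1` on `T_{d,p}` (`sum_leaveOut_le_one`).
Gibbs' inequality gives `H(α) ≤ -∑ α log q_k`, with equality only if `α = q_k`
(`gibbs_nonneg`, `gibbs_eq`). Averaging over `k` turns the right-hand side into `(d - 1) H(m)`, so
equality forces `α = q_k` on `T_{d,p}` for *every* `k` (`eq_leaveOut`).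

Comparing the various `q_k` on a tuple of the form `(u, w, v, z, …, z)`, with `u, v, z` in the support
`S` of `m` and `w` chosen so that the sum vanishes, shows `w ∈ S` and `m w = m u = m v`
(`support_step`). Hence `m` is constant on `S`, and `S` is stable under translation by differences of
its elements. If `S` has two elements it is all of `F_p` and `m` is uniform; if `S = {x}` then
`w = x` gives `d x = 0`, so `x = 0`. -/


/-- `phi a j` is the number of coordinates of the tuple `a` equal to `j`
(the `j`-th coordinate of the counting vector `Φ(a)`). -/
noncomputable def phi {p k : ℕ} (a : Fin k → ZMod p) (j : ZMod p) : ℕ :=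
  Nat.card {i : Fin k // a i = j}

/-- The adjacency matrix of the `d`-regular directed multigraph on `n` vertices
associated to a permutation `P` of the `n·d` points of the configuration model:
`A(P)_{kℓ} = #{k' ∈ F_k : P(k') ∈ F_ℓ}`. -/
noncomputable def adjMat (n d : ℕ) (P : Equiv.Perm (Fin n × Fin d)) :
    Matrix (Fin n) (Fin n) ℤ :=
  Matrix.of fun k l => (Nat.card {k' : Fin d // (P (k, k')).1 = l} : ℤ)

/-- `T_{d,p}`, the set of `d`-tuples over `F_p` summing to zero. -/
def Tset (d p : ℕ) [NeZero p] : Finset (Fin d → ZMod p) :=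
  Finset.univ.filter (fun a => ∑ i, a i = 0)

/-- The product of `m` over all coordinates of `a` except the `k`-th: the mass that independent
`m`-distributed coordinates other than `k` give to `a`. -/
noncomputable def leaveOut {d p : ℕ} (m : ZMod p → ℝ) (k : Fin d) (a : Fin d → ZMod p) : ℝ :=
  ∏ i ∈ Finset.univ.erase k, m (a i)

lemma mem_Tset {d p : ℕ} [NeZero p] {a : Fin d → ZMod p} :
    a ∈ Tset d p ↔ ∑ i, a i = 0 := by
  simp [Tset]

lemma sum_phi_mul {d p : ℕ} [NeZero p] (a : Fin d → ZMod p) (f : ZMod p → ℝ) :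
    ∑ j, (phi a j : ℝ) * f j = ∑ i, f (a i) := by
  have h : ∀ j, (phi a j : ℝ) * f j = ∑ i, if a i = j then f j else 0 := by
    intro j
    rw [← Finset.sum_filter, Finset.sum_const, nsmul_eq_mul, phi, Nat.card_eq_fintype_card,
      Fintype.card_subtype]
  simp_rw [h]
  rw [Finset.sum_comm]
  simp

/-- The constraint `∑ α_a Φ(a) = d m`, tested against an arbitrary function on `F_p`. -/
lemma sum_mul_sum {d p : ℕ} [NeZero p] {α : (Fin d → ZMod p) → ℝ} {m : ZMod p → ℝ}
    (hc : ∀ j : ZMod p, ∑ a ∈ Tset d p, α a * (phi a j : ℝ) = d * m j) (f : ZMod p → ℝ) :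
    ∑ a ∈ Tset d p, α a * ∑ i, f (a i) = d * ∑ j, m j * f j := by
  simp_rw [← sum_phi_mul, Finset.mul_sum]
  rw [Finset.sum_comm]
  refine Finset.sum_congr rfl fun j _ => ?_
  rw [← mul_assoc, ← hc j, Finset.sum_mul]
  exact Finset.sum_congr rfl fun a _ => by ring

lemma sum_alpha {d p : ℕ} [NeZero p] (hd : d ≠ 0) {α : (Fin d → ZMod p) → ℝ} {m : ZMod p → ℝ}
    (hmsum : ∑ j, m j = 1)
    (hc : ∀ j : ZMod p, ∑ a ∈ Tset d p, α a * (phi a j : ℝ) = d * m j) :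
    ∑ a ∈ Tset d p, α a = 1 := by
  have h := sum_mul_sum hc (fun _ => 1)
  have hd' : (d : ℝ) ≠ 0 := Nat.cast_ne_zero.2 hd
  simp only [Finset.sum_const, Finset.card_univ, Fintype.card_fin, nsmul_eq_mul, mul_one, hmsum,
    ← Finset.sum_mul] at h
  exact mul_right_cancel₀ hd' (by linarith)

/-- `α` is carried by the tuples with all coordinates in the support of `m`. -/
lemma alpha_eq_zero {d p : ℕ} [NeZero p] {α : (Fin d → ZMod p) → ℝ} {m : ZMod p → ℝ}
    (hα : ∀ a ∈ Tset d p, 0 ≤ α a)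
    (hc : ∀ j : ZMod p, ∑ a ∈ Tset d p, α a * (phi a j : ℝ) = d * m j)
    {a : Fin d → ZMod p} (ha : a ∈ Tset d p) {i : Fin d} (hi : m (a i) = 0) : α a = 0 := by
  have h := hc (a i)
  rw [hi, mul_zero, Finset.sum_eq_zero_iff_of_nonneg
    (fun b hb => mul_nonneg (hα b hb) (Nat.cast_nonneg _))] at h
  refine (mul_eq_zero.1 (h a ha)).resolve_right ?_
  have : Nonempty {i' : Fin d // a i' = a i} := ⟨⟨i, rfl⟩⟩
  exact Nat.cast_ne_zero.2 Nat.card_pos.ne'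

/-- The remaining coordinates determine the `k`-th one on `T_{d,p}`, so the sum is at most the
total mass `(∑ m) ^ (d - 1)` of a product distribution. -/
lemma sum_leaveOut_le_one {d p : ℕ} [NeZero p] {m : ZMod p → ℝ} (hm : ∀ j, 0 ≤ m j)
    (hmsum : ∑ j, m j = 1) (k : Fin d) : ∑ a ∈ Tset d p, leaveOut m k a ≤ 1 := by
  classical
  let r : (Fin d → ZMod p) → ({i : Fin d // i ≠ k} → ZMod p) := fun a i => a i
  have hq : ∀ a, leaveOut m k a = ∏ i, m (r a i) := by
    intro a
    rw [leaveOut]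
    exact Finset.prod_subtype (f := fun i => m (a i)) _ (by simp)
  have hinj : Set.InjOn r (Tset d p) := by
    intro a ha b hb hab
    have hne : ∀ i, i ≠ k → a i = b i := fun i hi => congrFun hab ⟨i, hi⟩
    have ha' := mem_Tset.1 ha
    have hb' := mem_Tset.1 hb
    rw [← Finset.add_sum_erase _ _ (Finset.mem_univ k)] at ha' hb'
    rw [Finset.sum_congr rfl (fun i hi => hne i (Finset.ne_of_mem_erase hi))] at ha'
    funext i
    by_cases hi : i = k
    · rw [hi]
      exact add_right_cancel (ha'.trans hb'.symm)
    · exact hne i hi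
  calc ∑ a ∈ Tset d p, leaveOut m k a = ∑ b ∈ (Tset d p).image r, ∏ i, m (b i) := by
        rw [Finset.sum_image hinj]
        exact Finset.sum_congr rfl fun a _ => hq a
    _ ≤ ∑ b : {i : Fin d // i ≠ k} → ZMod p, ∏ i, m (b i) :=
        Finset.sum_le_sum_of_subset_of_nonneg (Finset.subset_univ _)
          fun b _ _ => Finset.prod_nonneg fun i _ => hm _
    _ = 1 := by
        rw [← Fintype.prod_sum]
        simp [hmsum]

lemma gibbs_aux {x q : ℝ} (hx : 0 < x) (hq : 0 < q) :
    x * Real.log x - x * Real.log q - x + q = x * (q / x - 1 - Real.log (q / x)) := by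
  rw [Real.log_div hq.ne' hx.ne']
  field_simp
  ring

/-- Pointwise Gibbs inequality. -/
lemma gibbs_nonneg {x q : ℝ} (hx : 0 ≤ x) (hq : 0 ≤ q) (h : q = 0 → x = 0) :
    0 ≤ x * Real.log x - x * Real.log q - x + q := by
  rcases hx.eq_or_lt with rfl | hx'
  · simpa using hq
  have hq' : 0 < q := hq.lt_of_ne fun e => hx'.ne' (h e.symm)
  rw [gibbs_aux hx' hq']
  exact mul_nonneg hx (by linarith [Real.log_le_sub_one_of_pos (div_pos hq' hx')])

/-- Equality case of the pointwise Gibbs inequality. -/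
lemma gibbs_eq {x q : ℝ} (hx : 0 ≤ x) (hq : 0 ≤ q) (h : q = 0 → x = 0)
    (h0 : x * Real.log x - x * Real.log q - x + q = 0) : x = q := by
  rcases hx.eq_or_lt with rfl | hx'
  · simpa using h0.symm
  have hq' : 0 < q := hq.lt_of_ne fun e => hx'.ne' (h e.symm)
  rw [gibbs_aux hx' hq'] at h0
  by_contra hne
  have h1 : q / x ≠ 1 := fun e => hne ((div_eq_one_iff_eq hx'.ne').1 e).symm
  have := Real.log_lt_sub_one_of_pos (div_pos hq' hx') h1
  have := mul_pos hx' (sub_pos.2 this)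
  linarith

/-- Equality `H(α) = (d - 1) H(m)` forces `α` to be each of the leave-one-out products. -/
lemma eq_leaveOut {d p : ℕ} [NeZero p] (hd : d ≠ 0) {α : (Fin d → ZMod p) → ℝ}
    (hα : ∀ a ∈ Tset d p, 0 ≤ α a) {m : ZMod p → ℝ} (hm : ∀ j, 0 ≤ m j) (hmsum : ∑ j, m j = 1)
    (hc : ∀ j : ZMod p, ∑ a ∈ Tset d p, α a * (phi a j : ℝ) = d * m j)
    (h : -∑ a ∈ Tset d p, α a * Real.log (α a)
        + ((d : ℝ) - 1) * ∑ j : ZMod p, m j * Real.log (m j) = 0) :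
    ∀ k, ∀ a ∈ Tset d p, α a = leaveOut m k a := by
  have hq0 : ∀ (k : Fin d) (a : Fin d → ZMod p), 0 ≤ leaveOut m k a :=
    fun k a => Finset.prod_nonneg fun i _ => hm _
  have hac : ∀ k, ∀ a ∈ Tset d p, leaveOut m k a = 0 → α a = 0 := by
    intro k a ha h0
    obtain ⟨i, -, hi⟩ := Finset.prod_eq_zero_iff.1 h0
    exact alpha_eq_zero hα hc ha hi
  have hlog : ∀ k, ∀ a ∈ Tset d p, α a * Real.log (leaveOut m k a)
      = α a * (∑ i, Real.log (m (a i)) - Real.log (m (a k))) := by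
    intro k a ha
    by_cases h0 : α a = 0
    · simp [h0]
    rw [leaveOut, Real.log_prod (fun i _ hi => h0 (alpha_eq_zero hα hc ha hi)),
      ← Finset.add_sum_erase _ _ (Finset.mem_univ k)]
    ring
  let g : Fin d → (Fin d → ZMod p) → ℝ := fun k a =>
    α a * Real.log (α a) - α a * Real.log (leaveOut m k a) - α a + leaveOut m k a
  have hg : ∀ k, ∀ a ∈ Tset d p, 0 ≤ g k a :=
    fun k a ha => gibbs_nonneg (hα a ha) (hq0 k a) (hac k a ha)
  have hE := sum_mul_sum hc (fun j => Real.log (m j))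
  have hcross : ∑ k : Fin d, ∑ a ∈ Tset d p, α a * Real.log (leaveOut m k a)
      = ((d : ℝ) - 1) * (d * ∑ j, m j * Real.log (m j)) := by
    rw [← hE, Finset.sum_comm, Finset.mul_sum]
    refine Finset.sum_congr rfl fun a ha => ?_
    rw [Finset.sum_congr rfl fun k _ => hlog k a ha, ← Finset.mul_sum, Finset.sum_sub_distrib]
    simp only [Finset.sum_const, Finset.card_univ, Fintype.card_fin, nsmul_eq_mul]
    ring
  have hsum : ∑ k, ∑ a ∈ Tset d p, g k a ≤ 0 := by
    have h1 : ∑ k : Fin d, ∑ a ∈ Tset d p, leaveOut m k a ≤ d := by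
      calc _ ≤ ∑ _k : Fin d, (1 : ℝ) :=
            Finset.sum_le_sum fun k _ => sum_leaveOut_le_one hm hmsum k
        _ = d := by simp
    simp only [g, Finset.sum_add_distrib, Finset.sum_sub_distrib, hcross, sum_alpha hd hmsum hc]
    simp only [Finset.sum_const, Finset.card_univ, Fintype.card_fin, nsmul_eq_mul]
    have h2 : (d : ℝ) * ∑ a ∈ Tset d p, α a * Real.log (α a)
        = ((d : ℝ) - 1) * (d * ∑ j, m j * Real.log (m j)) := by
      linear_combination (-(d : ℝ)) * h
    linarith
  have hsum0 := le_antisymm hsum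
    (Finset.sum_nonneg fun k _ => Finset.sum_nonneg fun a ha => hg k a ha)
  rw [Finset.sum_eq_zero_iff_of_nonneg fun k _ => Finset.sum_nonneg (hg k)] at hsum0
  intro k a ha
  have hk := hsum0 k (Finset.mem_univ k)
  rw [Finset.sum_eq_zero_iff_of_nonneg (hg k)] at hk
  exact gibbs_eq (hα a ha) (hq0 k a) (hac k a ha) (hk a ha)

/-- If all leave-one-out products agree on `T_{d,p}`, then `m` takes the same value at any two points
`u`, `v` of its support, and the support contains the coordinate `w` completing
`(u, w, v, z, …, z)` to a zero-sum tuple. -/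
lemma support_step {d p : ℕ} [NeZero p] (hd : 3 ≤ d) {α : (Fin d → ZMod p) → ℝ}
    {m : ZMod p → ℝ}
    (hq : ∀ k, ∀ a ∈ Tset d p, α a = leaveOut m k a)
    {u v z : ZMod p} (hu : 0 < m u) (hv : 0 < m v) (hz : 0 < m z) :
    0 < m (-(u + v + ((d : ZMod p) - 3) * z)) ∧ m u = m v := by
  obtain ⟨n, rfl⟩ : ∃ n, d = n + 3 := ⟨d - 3, by omega⟩
  have hn : ((n + 3 : ℕ) : ZMod p) - 3 = n := by push_cast; ring
  rw [hn]
  set w := -(u + v + (n : ZMod p) * z) with hw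
  let a : Fin (n + 3) → ZMod p := Fin.cons u (Fin.cons w (Fin.cons v fun _ => z))
  have ha : a ∈ Tset (n + 3) p := by
    rw [mem_Tset]
    simp only [a, Fin.sum_univ_succ, Fin.cons_zero, Fin.cons_succ, Finset.sum_const,
      Finset.card_univ, Fintype.card_fin, nsmul_eq_mul]
    rw [hw]; ring
  have a0 : a 0 = u := rfl
  have a1 : a 1 = w := rfl
  have a2 : a 2 = v := rfl
  have hfull : ∀ k, m (a k) * α a = ∏ i, m (a i) := fun k => by
    rw [hq k a ha, leaveOut, Finset.mul_prod_erase _ (fun i => m (a i)) (Finset.mem_univ k)]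
  have hpos : 0 < α a := by
    rw [hq 1 a ha]
    refine Finset.prod_pos fun i hi => ?_
    have hi1 := Finset.ne_of_mem_erase hi
    revert hi1
    refine Fin.cases (fun _ => hu) (fun i => ?_) i
    refine Fin.cases (fun h => absurd rfl h) (fun i => ?_) i
    exact fun _ => Fin.cases hv (fun _ => hz) i
  have h01 := (hfull 1).trans (hfull 0).symm
  have h02 := (hfull 0).trans (hfull 2).symm
  rw [a0, a1] at h01
  rw [a0, a2] at h02
  have e1 := mul_right_cancel₀ hpos.ne' h01
  exact ⟨e1 ▸ hu, mul_right_cancel₀ hpos.ne' h02⟩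

/-- **equality cases of the rate function.** Let `d ≥ 3`, `p` prime with
`gcd(p,d)=1`. For `α : T_{d,p} → [0,∞)` and `𝔫 ∈ [0,∞)^p` with `∑_j 𝔫_j = 1` and
`∑_a α_a Φ(a) = d·𝔫`, equality `-∑_a α_a ln α_a + (d-1) ∑_j 𝔫_j ln 𝔫_j = 0` holds iff
either `α ≡ 1/p^{d-1}` on `T_{d,p}` and `𝔫 ≡ 1/p`, or `α` is the point mass at the
all-zeros tuple and `𝔫` is the point mass at `0`. -/
theorem stmt8 (d p : ℕ) (hd : 3 ≤ d) [Fact p.Prime] (hgcd : Nat.gcd p d = 1)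
    (α : (Fin d → ZMod p) → ℝ) (hα : ∀ a ∈ Tset d p, 0 ≤ α a)
    (m : ZMod p → ℝ) (hm : ∀ j, 0 ≤ m j) (hmsum : ∑ j, m j = 1)
    (hc : ∀ j : ZMod p, ∑ a ∈ Tset d p, α a * (phi a j : ℝ) = d * m j) :
    (-∑ a ∈ Tset d p, α a * Real.log (α a)
        + ((d : ℝ) - 1) * ∑ j : ZMod p, m j * Real.log (m j) = 0)
      ↔ ((∀ a ∈ Tset d p, α a = 1 / (p : ℝ) ^ (d - 1)) ∧ (∀ j : ZMod p, m j = 1 / p))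
        ∨ ((α (fun _ => 0) = 1 ∧ ∀ a ∈ Tset d p, a ≠ (fun _ => 0) → α a = 0)
            ∧ (m 0 = 1 ∧ ∀ j : ZMod p, j ≠ 0 → m j = 0)) := by
  have hp : p.Prime := Fact.out
  have hd0 : d ≠ 0 := by omega
  have hp0 : (p : ℝ) ≠ 0 := Nat.cast_ne_zero.2 hp.ne_zero
  constructor
  · intro h
    have hq := eq_leaveOut hd0 hα hm hmsum hc h
    obtain ⟨x, hx⟩ : ∃ x, 0 < m x := by
      by_contra! hcon
      have := Finset.sum_nonpos fun j (_ : j ∈ Finset.univ) => hcon j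
      linarith
    by_cases hone : ∀ y, 0 < m y → y = x
    · right
      have hzero : ∀ j, j ≠ x → m j = 0 := fun j hj =>
        ((hm j).eq_or_lt.resolve_right fun hlt => hj (hone j hlt)).symm
      have hmx : m x = 1 := by
        rw [← hmsum, Fintype.sum_eq_single x hzero]
      have hx0 : x = 0 := by
        have h1 := hone _ (support_step hd hq hx hx hx).1
        have h2 : (d : ZMod p) * x = 0 := by linear_combination -h1
        refine (mul_eq_zero.1 h2).resolve_left fun h3 => ?_
        rw [ZMod.natCast_eq_zero_iff] at h3
        exact hp.one_lt.ne' (Nat.dvd_one.1 (hgcd ▸ Nat.dvd_gcd dvd_rfl h3))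
      subst hx0
      refine ⟨⟨?_, fun a ha hne => ?_⟩, hmx, hzero⟩
      · rw [hq ⟨0, by omega⟩ _ (mem_Tset.2 (by simp)), leaveOut]
        simp [hmx]
      · obtain ⟨i, hi⟩ := Function.ne_iff.1 hne
        exact alpha_eq_zero hα hc ha (hzero _ hi)
    · left
      push Not at hone
      obtain ⟨y, hy, hyx⟩ := hone
      -- Two applications of `support_step` compose to translation by `y - x`.
      have htrans : ∀ u, 0 < m u → 0 < m (u + (y - x)) := by
        intro u hu
        have h1 := (support_step hd hq hu hy hx).1
        have h2 := (support_step hd hq h1 hx hx).1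
        convert h2 using 2
        ring
      have hmul : ∀ n : ℕ, 0 < m (x + n * (y - x)) := by
        intro n
        induction n with
        | zero => simpa using hx
        | succ n ih =>
          convert htrans _ ih using 2
          push_cast; ring
      have hpos : ∀ t, 0 < m t := by
        intro t
        have hyx' : y - x ≠ 0 := sub_ne_zero.2 hyx
        have h1 := hmul ((t - x) / (y - x)).val
        rwa [ZMod.natCast_zmod_val, div_mul_cancel₀ _ hyx', add_sub_cancel] at h1
      have hconst : ∀ j, m j = m x := fun j => (support_step hd hq (hpos j) hx hx).2
      have hmx : ∀ j, m j = 1 / p := by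
        have h1 := hmsum
        simp only [hconst, Finset.sum_const, Finset.card_univ, ZMod.card, nsmul_eq_mul] at h1
        intro j
        rw [hconst, eq_div_iff hp0]
        linarith
      refine ⟨fun a ha => ?_, hmx⟩
      rw [hq ⟨0, by omega⟩ a ha, leaveOut]
      simp [hmx]
  · rintro (⟨h1, h2⟩ | ⟨⟨h1, h2⟩, h3, h4⟩)
    · have hs := sum_alpha hd0 hmsum hc
      have e1 : ∑ a ∈ Tset d p, α a * Real.log (α a) = Real.log (1 / (p : ℝ) ^ (d - 1)) := by
        rw [Finset.sum_congr rfl fun a ha => congrArg (α a * Real.log ·) (h1 a ha),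
          ← Finset.sum_mul, hs, one_mul]
      have e2 : ∑ j, m j * Real.log (m j) = Real.log (1 / (p : ℝ)) := by
        rw [Finset.sum_congr rfl fun j _ => congrArg (m j * Real.log ·) (h2 j),
          ← Finset.sum_mul, hmsum, one_mul]
      rw [e1, e2, one_div, one_div, Real.log_inv, Real.log_inv, Real.log_pow,
        Nat.cast_sub (by omega)]
      push_cast
      ring
    · rw [Finset.sum_eq_zero, Finset.sum_eq_zero]
      · simp
      · intro j _
        by_cases hj : j = 0
        · simp [hj, h3]
        · simp [h4 j hj]
      · intro a ha
        by_cases hj : a = fun _ => 0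
        · simp [hj, h1]
        · simp [h2 a ha hj]
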